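/- For all integers m ≥ 2 and p ≥ 2 and each i with 0 ≤ i ≤ p−1, every permutation of the vertex set ℤ_{mp} of the circulant graph C(m,p) that permutes the set M_i = {i + r·p : 0 ≤ r ≤ m−1} and fixes every vertex outside M_i is an automorphism of C(m,p). -/

import Mathlib

/-!
Reduction modulo `p` is a ring homomorphism `π : ℤ_{mp} → ℤ_p` whose fibres are exactly the
progressions `{c + r·p : 0 ≤ r < m}` (`mem_progression_iff`). The jump set is therefore
`π ⁻¹' {1, -1}`, so adjacency of `u` and `v` in `C(m,p)` depends only on `π u` and `π v`
(`circC_adj_iff`). The set `M_i` is the fibre of `π` over `i`, so a permutation that preserves `M_i`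
and fixes everything else satisfies `π ∘ σ = π`, and hence preserves adjacency.
-/

/-- A permutation of the vertices is a graph automorphism if it preserves adjacency. -/
def IsGraphAut {V : Type*} (G : SimpleGraph V) (σ : Equiv.Perm V) : Prop :=
  ∀ u v : V, G.Adj (σ u) (σ v) ↔ G.Adj u v

/-- A labeling with `r` labels is distinguishing if no nontrivial automorphism preserves it. -/
def IsDistinguishing {V : Type*} (G : SimpleGraph V) {r : ℕ} (c : V → Fin r) : Prop :=
  ∀ σ : Equiv.Perm V, IsGraphAut G σ → (∀ v, c (σ v) = c v) → σ = Equiv.refl V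

/-- The distinguishing number of a graph: the least `r` admitting an `r`-distinguishing
labeling. -/
noncomputable def distinguishingNumber {V : Type*} (G : SimpleGraph V) : ℕ :=
  sInf {r : ℕ | ∃ c : V → Fin r, IsDistinguishing G c}

/-- The jump set `A = {p-1+r·p, p+1+r·p : 0 ≤ r ≤ m-1}` inside `ℤ_{mp}`. -/
def jumpSet (m p : ℕ) : Set (ZMod (m * p)) :=
  {a | ∃ r < m, a = ((p - 1 + r * p : ℕ) : ZMod (m * p)) ∨
                a = ((p + 1 + r * p : ℕ) : ZMod (m * p))}

/-- The circulant graph `C(m,p)` on vertex set `ℤ_{mp}`: `i` and `j` are adjacent iff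
`j - i (mod mp)` lies in the jump set. -/
def circC (m p : ℕ) : SimpleGraph (ZMod (m * p)) :=
  SimpleGraph.circulantGraph (jumpSet m p)

/-- The set `M_i = {i + r·p : 0 ≤ r ≤ m-1}` in `ℤ_{mp}`. -/
def Mset (m p i : ℕ) : Set (ZMod (m * p)) :=
  {v | ∃ r < m, v = ((i + r * p : ℕ) : ZMod (m * p))}

/-- Reduction modulo `p` on `ℤ_{mp}`. -/
def redMod (m p : ℕ) : ZMod (m * p) →+* ZMod p :=
  ZMod.castHom (Dvd.intro_left m rfl) (ZMod p)

/-- The progression `c + r·p`, `0 ≤ r < m`, is the fibre of reduction modulo `p` over `c`. -/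
theorem mem_progression_iff {m p : ℕ} (hm : 2 ≤ m) (hp : 2 ≤ p) (c : ℕ) (a : ZMod (m * p)) :
    (∃ r < m, a = ((c + r * p : ℕ) : ZMod (m * p))) ↔ redMod m p a = (c : ZMod p) := by
  have : NeZero (m * p) := ⟨by positivity⟩
  constructor
  · rintro ⟨r, -, rfl⟩
    rw [map_natCast]
    simp
  · intro h
    -- The index `r` is read off from the representative of `a - c` in `[0, mp)`.
    have hval : (((a - c).val : ℕ) : ZMod (m * p)) = a - c := ZMod.natCast_zmod_val _
    have h0 : (((a - c).val : ℕ) : ZMod p) = 0 := by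
      rw [← map_natCast (redMod m p), hval, map_sub, h, map_natCast, sub_self]
    obtain ⟨r, hr⟩ := (ZMod.natCast_eq_zero_iff _ _).1 h0
    refine ⟨r, ?_, ?_⟩
    · have hlt := ZMod.val_lt (a - (c : ZMod (m * p)))
      rw [hr, mul_comm] at hlt
      exact lt_of_mul_lt_mul_right hlt (Nat.zero_le p)
    · rw [Nat.cast_add, mul_comm r p, ← hr, hval]
      ring

theorem mem_jumpSet_iff {m p : ℕ} (hm : 2 ≤ m) (hp : 2 ≤ p) (a : ZMod (m * p)) :
    a ∈ jumpSet m p ↔ redMod m p a = -1 ∨ redMod m p a = 1 := by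
  have h1 := mem_progression_iff hm hp (p - 1) a
  have h2 := mem_progression_iff hm hp (p + 1) a
  rw [Nat.cast_sub (by omega)] at h1
  simp only [CharP.cast_eq_zero, Nat.cast_one, zero_sub, Nat.cast_add, zero_add] at h1 h2
  rw [← h1, ← h2, ← exists_or]
  simp only [jumpSet, Set.mem_ofPred_eq, Nat.cast_add, Nat.cast_one, and_or_left]

/-- Adjacency in `C(m,p)` depends only on residues modulo `p`. -/
theorem circC_adj_iff {m p : ℕ} (hm : 2 ≤ m) (hp : 2 ≤ p) (u v : ZMod (m * p)) :
    (circC m p).Adj u v ↔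
      redMod m p u - redMod m p v = -1 ∨ redMod m p u - redMod m p v = 1 := by
  have : Fact (1 < p) := ⟨hp⟩
  simp only [circC, SimpleGraph.circulantGraph, SimpleGraph.fromRel_adj,
    mem_jumpSet_iff hm hp, map_sub]
  constructor
  · rintro ⟨-, h | h⟩
    · exact h
    · rw [← neg_sub, neg_inj, neg_eq_iff_eq_neg] at h
      exact h.symm
  · intro h
    refine ⟨?_, Or.inl h⟩
    rintro rfl
    simp at h

theorem stmt_4 (m p : ℕ) (hm : 2 ≤ m) (hp : 2 ≤ p) (i : ℕ) (hi : i < p)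
    (σ : Equiv.Perm (ZMod (m * p)))
    (hmaps : ∀ v ∈ Mset m p i, σ v ∈ Mset m p i)
    (hfix : ∀ v ∉ Mset m p i, σ v = v) :
    IsGraphAut (circC m p) σ := by
  have hσ : ∀ v, redMod m p (σ v) = redMod m p v := by
    intro v
    by_cases hv : v ∈ Mset m p i
    · rw [(mem_progression_iff hm hp i _).1 (hmaps v hv), (mem_progression_iff hm hp i _).1 hv]
    · rw [hfix v hv]
  intro u v
  rw [circC_adj_iff hm hp, circC_adj_iff hm hp, hσ, hσ]
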